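/- arXiv:1311.3631 — 2 statements merged into one kernel-verified Lean document; each statement's English description precedes it below -/
import Mathlib

section
/- Translation correctness for the pattern 'Ψ1 during [a,b] raises Ψ2': let π be a finite timed trace, Ψ1, Ψ2 state predicates on S, and 0 ≤ a ≤ b. Assume there is an index p with t_p = t_0 + a and an index q with t_q = t_0 + b. Then π ⊨ (X_{≤a} G_{≤b−a} Ψ1) ⟹ X_{≤b} Ψ2 if and only if the following implication holds: if Ψ1(s_i) for every index i with t_0 + a ≤ t_i ≤ t_0 + b, then Ψ2(s_q). -/
/-- A finite timed trace: states `s 0, …, s n` with strictly increasing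
time stamps `t 0 < t 1 < ⋯ < t n`. -/
structure TTrace (S : Type*) where
  n : ℕ
  s : ℕ → S
  t : ℕ → ℝ
  mono : ∀ i, i < n → t i < t (i + 1)

/-- The suffix `π^i` of a timed trace. -/
def TTrace.suffix {S : Type*} (π : TTrace S) (i : ℕ) : TTrace S where
  n := π.n - i
  s := fun j => π.s (i + j)
  t := fun j => π.t (i + j)
  mono := fun j hj => π.mono (i + j) (by omega)

/-- A trace property is a predicate on timed traces. -/
abbrev TraceProp (S : Type*) := TTrace S → Prop

/-- A state predicate regarded as a trace property: it holds on `π` iff it holds in `s 0`. -/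
def statePred {S : Type*} (Ψ : S → Prop) : TraceProp S := fun π => Ψ (π.s 0)

/-- `π ⊨ G_{≤k} Φ` iff `π^i ⊨ Φ` for every index `i` with `t i ≤ t 0 + k`. -/
def Gle {S : Type*} (k : ℝ) (Φ : TraceProp S) : TraceProp S := fun π =>
  ∀ i, i ≤ π.n → π.t i ≤ π.t 0 + k → Φ (π.suffix i)

/-- `π ⊨ F_{≤k} Φ` iff `π^i ⊨ Φ` for some index `i` with `t i ≤ t 0 + k`. -/
def Fle {S : Type*} (k : ℝ) (Φ : TraceProp S) : TraceProp S := fun π =>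
  ∃ i, i ≤ π.n ∧ π.t i ≤ π.t 0 + k ∧ Φ (π.suffix i)

/-- `π ⊨ X_{≤k} Φ` iff `π^m ⊨ Φ` for `m` the largest index with `t m ≤ t 0 + k`. -/
noncomputable def Xle {S : Type*} (k : ℝ) (Φ : TraceProp S) : TraceProp S := fun π =>
  Φ (π.suffix (@Nat.findGreatest (fun i => π.t i ≤ π.t 0 + k) (Classical.decPred _) π.n))

def pImp {S : Type*} (Φ1 Φ2 : TraceProp S) : TraceProp S := fun π => Φ1 π → Φ2 π
def pNot {S : Type*} (Φ : TraceProp S) : TraceProp S := fun π => ¬ Φ π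
def pAnd {S : Type*} (Φ1 Φ2 : TraceProp S) : TraceProp S := fun π => Φ1 π ∧ Φ2 π
def pOr {S : Type*} (Φ1 Φ2 : TraceProp S) : TraceProp S := fun π => Φ1 π ∨ Φ2 π
def pTrue {S : Type*} : TraceProp S := fun _ => True
def pFalse {S : Type*} : TraceProp S := fun _ => False

/-!
Since time stamps strictly increase, an index whose time stamp is exactly `t 0 + k` is the largest
one within the bound `k`, so `X_{≤k}` evaluates its argument on the suffix starting there.
The `G_{≤b−a}` under `X_{≤a}` is thus read from time `t 0 + a` on, and its bound shifts to
`t 0 + a + (b - a) = t 0 + b`.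
-/

theorem findGreatest_le_eq_of_strictMonoOn {α : Type*} [Preorder α] {f : ℕ → α} {n p : ℕ}
    (hf : StrictMonoOn f (Set.Iic n)) (hp : p ≤ n) [DecidablePred fun i => f i ≤ f p] :
    Nat.findGreatest (fun i => f i ≤ f p) n = p :=
  Nat.findGreatest_eq_iff.mpr
    ⟨hp, fun _ => le_rfl, fun _ hpj hjn => (hf hp hjn hpj).not_ge⟩

namespace TTrace

variable {S : Type*}

theorem strictMonoOn_t (π : TTrace S) : StrictMonoOn π.t (Set.Iic π.n) :=
  strictMonoOn_Iic_of_lt_succ π.mono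

theorem suffix_suffix (π : TTrace S) (i j : ℕ) :
    (π.suffix i).suffix j = π.suffix (i + j) := by
  simp only [suffix, Nat.sub_sub, Nat.add_assoc]

end TTrace

section BoundedOperators

variable {S : Type*} {π : TTrace S} {p : ℕ}

theorem Xle_iff_of_t_eq {k : ℝ} (hp : p ≤ π.n) (hpt : π.t p = π.t 0 + k) (Φ : TraceProp S) :
    Xle k Φ π ↔ Φ (π.suffix p) := by
  rw [Xle, ← hpt, findGreatest_le_eq_of_strictMonoOn π.strictMonoOn_t hp]

theorem Gle_suffix_iff (hp : p ≤ π.n) (k : ℝ) (Φ : TraceProp S) :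
    Gle k Φ (π.suffix p) ↔
      ∀ i, i ≤ π.n → π.t p ≤ π.t i → π.t i ≤ π.t p + k → Φ (π.suffix i) := by
  constructor
  · intro hG i hi hpi hik
    obtain ⟨j, rfl⟩ := Nat.exists_eq_add_of_le ((π.strictMonoOn_t.le_iff_le hp hi).mp hpi)
    rw [← π.suffix_suffix]
    exact hG j (Nat.le_sub_of_add_le' hi) hik
  · intro h j hj hjk
    have hpj : p + j ≤ π.n := Nat.add_le_of_le_sub' hp hj
    rw [π.suffix_suffix]
    exact h (p + j) hpj (π.strictMonoOn_t.monotoneOn hp hpj (Nat.le_add_right p j)) hjk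

end BoundedOperators

theorem pattern_during_raises_general {S : Type*} {π : TTrace S} (Φ1 Φ2 : TraceProp S) {a b : ℝ}
    (hp : ∃ p, p ≤ π.n ∧ π.t p = π.t 0 + a) {q : ℕ} (hq : q ≤ π.n) (hqt : π.t q = π.t 0 + b) :
    pImp (Xle a (Gle (b - a) Φ1)) (Xle b Φ2) π ↔
      ((∀ i, i ≤ π.n → π.t 0 + a ≤ π.t i → π.t i ≤ π.t 0 + b → Φ1 (π.suffix i)) →
        Φ2 (π.suffix q)) := by
  obtain ⟨p, hpn, hpt⟩ := hp
  have window_end : π.t 0 + a + (b - a) = π.t 0 + b := by ring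
  rw [pImp, Xle_iff_of_t_eq hpn hpt, Xle_iff_of_t_eq hq hqt, Gle_suffix_iff hpn, hpt, window_end]

/-- translation correctness for 'Ψ1 during [a,b] raises Ψ2':
assuming some index `p` has `t p = t 0 + a` and index `q` has `t q = t 0 + b`,
`π ⊨ (X_{≤a} G_{≤b−a} Ψ1) ⟹ X_{≤b} Ψ2` iff: whenever `Ψ1 (s i)` holds for every
index `i` with `t 0 + a ≤ t i ≤ t 0 + b`, then `Ψ2 (s q)`. -/
theorem pattern_during_raises {S : Type*} (π : TTrace S)
    (Ψ1 Ψ2 : S → Prop) (a b : ℝ) (ha : 0 ≤ a) (hab : a ≤ b)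
    (hp : ∃ p, p ≤ π.n ∧ π.t p = π.t 0 + a)
    (q : ℕ) (hq : q ≤ π.n) (hqt : π.t q = π.t 0 + b) :
    pImp (Xle a (Gle (b - a) (statePred Ψ1))) (Xle b (statePred Ψ2)) π ↔
      ((∀ i, i ≤ π.n → π.t 0 + a ≤ π.t i → π.t i ≤ π.t 0 + b → Ψ1 (π.s i)) →
        Ψ2 (π.s q)) :=
  pattern_during_raises_general (statePred Ψ1) (statePred Ψ2) hp hq hqt
end

section
/- Translation correctness for the sliding-interval pattern 'whenever Ψ1 occurs, Ψ2 holds during following [a,b]': let π be a finite timed trace, Ψ1, Ψ2 state predicates on S, and 0 ≤ a ≤ b ≤ k. Assume that for every index i with t_i ≤ t_0 + (k − b) there is an index m with t_m = t_i + a. Then π ⊨ G_{≤k−b}(Ψ1 ⟹ X_{≤a} G_{≤b−a} Ψ2) if and only if for every index i with t_i ≤ t_0 + (k − b) at which Ψ1(s_i) holds, every index j with t_i + a ≤ t_j ≤ t_i + b satisfies Ψ2(s_j). -/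
/-! Some index carries the time stamp `t i + a` exactly, so `X_{≤a}` jumps from `i` to that index,
and the window of length `b - a` starting there is `[t i + a, t i + b]`. -/

section

variable {S : Type*} {π : TTrace S} {Φ Φ₁ Φ₂ : TraceProp S} {i j m : ℕ} {a b c : ℝ}

theorem TTrace.suffix_suffix_s6 (π : TTrace S) (i j : ℕ) :
    (π.suffix i).suffix j = π.suffix (i + j) := by
  simp only [TTrace.suffix, Nat.sub_sub, Nat.add_assoc]

theorem TTrace.strictMonoOn_t_s6 (π : TTrace S) : StrictMonoOn π.t (Set.Iic π.n) :=
  strictMonoOn_Iic_of_lt_succ π.mono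

theorem TTrace.t_le_t_iff (π : TTrace S) (hi : i ≤ π.n) (hj : j ≤ π.n) : π.t i ≤ π.t j ↔ i ≤ j :=
  π.strictMonoOn_t_s6.le_iff_le hi hj

theorem TTrace.isGreatest_setOf_t_le (π : TTrace S) (hm : m ≤ π.n) :
    IsGreatest {l | l ≤ π.n ∧ π.t l ≤ π.t m} m :=
  ⟨⟨hm, le_rfl⟩, fun _ hl => (π.t_le_t_iff hl.1 hm).mp hl.2⟩

theorem gle_suffix_iff (hi : i ≤ π.n) :
    Gle c Φ (π.suffix i) ↔
      ∀ j, j ≤ π.n → π.t i ≤ π.t j → π.t j ≤ π.t i + c → Φ (π.suffix j) := by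
  constructor
  · intro h j hj hij hjc
    obtain ⟨d, rfl⟩ := Nat.exists_eq_add_of_le ((π.t_le_t_iff hi hj).mp hij)
    exact π.suffix_suffix_s6 i d ▸ h d (Nat.le_sub_of_add_le' hj) hjc
  · intro h d (hd : d ≤ π.n - i) hdc
    have hid : i + d ≤ π.n := Nat.add_le_of_le_sub' hi hd
    have ht : π.t i ≤ π.t (i + d) := (π.t_le_t_iff hi hid).mpr (Nat.le_add_right i d)
    exact (π.suffix_suffix_s6 i d).symm ▸ h (i + d) hid ht hdc

theorem xle_iff_of_isGreatest (hm : IsGreatest {l | l ≤ π.n ∧ π.t l ≤ π.t 0 + a} m) :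
    Xle a Φ π ↔ Φ (π.suffix m) := by
  classical
  have hfind : Nat.findGreatest (fun l => π.t l ≤ π.t 0 + a) π.n = m :=
    Nat.findGreatest_eq_iff.mpr
      ⟨hm.1.1, fun _ => hm.1.2, fun l hml hl hla => hml.not_ge (hm.2 ⟨hl, hla⟩)⟩
  rw [Xle, ← hfind]

theorem xle_suffix_iff (him : i ≤ m) (hm : m ≤ π.n) (hma : π.t m = π.t i + a) :
    Xle a Φ (π.suffix i) ↔ Φ (π.suffix m) := by
  obtain ⟨d, rfl⟩ := Nat.exists_eq_add_of_le him
  have hgreatest := (π.suffix i).isGreatest_setOf_t_le (Nat.le_sub_of_add_le' hm)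
  have hd : (π.suffix i).t d = (π.suffix i).t 0 + a := hma
  rw [hd] at hgreatest
  rw [← π.suffix_suffix_s6 i d]
  exact xle_iff_of_isGreatest hgreatest

theorem xle_gle_suffix_iff (ha : 0 ≤ a) (hi : i ≤ π.n) (hm : m ≤ π.n)
    (hma : π.t m = π.t i + a) :
    Xle a (Gle (b - a) Φ) (π.suffix i) ↔
      ∀ j, j ≤ π.n → π.t i + a ≤ π.t j → π.t j ≤ π.t i + b → Φ (π.suffix j) := by
  have him : i ≤ m := (π.t_le_t_iff hi hm).mp (hma ▸ le_add_of_nonneg_right ha)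
  have hend : π.t m + (b - a) = π.t i + b := by rw [hma]; ring
  rw [xle_suffix_iff him hm hma, gle_suffix_iff hm, hend, hma]

theorem pattern_sliding_holds_during_general (π : TTrace S) (Φ₁ Φ₂ : TraceProp S) (ha : 0 ≤ a)
    (hm : ∀ i, i ≤ π.n → π.t i ≤ π.t 0 + c → Φ₁ (π.suffix i) →
      ∃ m, m ≤ π.n ∧ π.t m = π.t i + a) :
    Gle c (pImp Φ₁ (Xle a (Gle (b - a) Φ₂))) π ↔
      ∀ i, i ≤ π.n → π.t i ≤ π.t 0 + c → Φ₁ (π.suffix i) →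
        ∀ j, j ≤ π.n → π.t i + a ≤ π.t j → π.t j ≤ π.t i + b → Φ₂ (π.suffix j) := by
  refine forall₃_congr fun i hi hic => forall_congr' fun hΦ₁ => ?_
  obtain ⟨m, hmn, hma⟩ := hm i hi hic hΦ₁
  exact xle_gle_suffix_iff ha hi hmn hma

end

/-- translation correctness for the sliding-interval pattern
'whenever Ψ1 occurs, Ψ2 holds during following [a,b]':
`π ⊨ G_{≤k−b}(Ψ1 ⟹ X_{≤a} G_{≤b−a} Ψ2)` iff for every index `i` with
`t i ≤ t 0 + (k − b)` at which `Ψ1 (s i)` holds, every index `j` with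
`t i + a ≤ t j ≤ t i + b` satisfies `Ψ2 (s j)`. -/
theorem pattern_sliding_holds_during {S : Type*} (π : TTrace S)
    (Ψ1 Ψ2 : S → Prop) (a b k : ℝ) (ha : 0 ≤ a) (hab : a ≤ b) (hbk : b ≤ k)
    (hm : ∀ i, i ≤ π.n → π.t i ≤ π.t 0 + (k - b) →
            ∃ m, m ≤ π.n ∧ π.t m = π.t i + a) :
    Gle (k - b) (pImp (statePred Ψ1) (Xle a (Gle (b - a) (statePred Ψ2)))) π ↔
      ∀ i, i ≤ π.n → π.t i ≤ π.t 0 + (k - b) → Ψ1 (π.s i) →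
        ∀ j, j ≤ π.n → π.t i + a ≤ π.t j → π.t j ≤ π.t i + b → Ψ2 (π.s j) := by
  exact pattern_sliding_holds_during_general π (statePred Ψ1) (statePred Ψ2) ha
    fun i hi hik _ => hm i hi hik
end
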